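/- Let (a_n) be an arithmetic sequence with ratios q_n, and x ∈ 𝕋 whose support is q-divergent. Then x ∈ t^s_{(a_n)}(𝕋) if and only if (i) lim_{n ∈ D'} c_n/q_n = 0 in 𝕋 for some D' ⊆ supp(x) with d(supp(x) \ D') = 0, and (ii) for every D ⊆ supp(x) with d(D \ supp(x)) = 0 such that D − 1 is q-bounded, there exists D' ⊆ D with d(D \ D') = 0 and lim_{n ∈ D'} c_n/q_n = 0 in ℝ. -/

import Mathlib

open Filter Topology Set

/-- Upper natural density of a set of naturals. -/
noncomputable def upperDensity (A : Set ℕ) : ℝ :=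
  Filter.limsup (fun n => (Nat.card ↥(A ∩ Set.Iio n) : ℝ) / n) Filter.atTop

/-- `A` has natural density `δ`. -/
def HasDensity (A : Set ℕ) (δ : ℝ) : Prop :=
  Filter.Tendsto (fun n => (Nat.card ↥(A ∩ Set.Iio n) : ℝ) / n) Filter.atTop (nhds δ)

/-- Statistical convergence of a real sequence. -/
def StatTendsto (x : ℕ → ℝ) (ξ : ℝ) : Prop :=
  ∀ ε : ℝ, 0 < ε → HasDensity {n | ε ≤ |x n - ξ|} 0

/-- An arithmetic sequence: `a 0 = 1 < a 1 < a 2 < ⋯` and `a n ∣ a (n+1)`. -/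
def IsArithmeticSeq (a : ℕ → ℕ) : Prop :=
  a 0 = 1 ∧ StrictMono a ∧ ∀ n, a n ∣ a (n + 1)

/-- The ratio `q n = a n / a (n-1)` as a real number. -/
noncomputable def qr (a : ℕ → ℕ) (n : ℕ) : ℝ := (a n : ℝ) / (a (n - 1) : ℝ)

/-- `(c n)` is a canonical representation sequence w.r.t. `(a n)`:
`0 ≤ c n < q n` and `c n < q n - 1` for infinitely many `n`. -/
def IsCanonicalRep (a : ℕ → ℕ) (c : ℕ → ℕ) : Prop :=
  c 0 = 0 ∧ (∀ n, 1 ≤ n → c n < a n / a (n - 1)) ∧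
    (∀ N, ∃ n, N ≤ n ∧ 1 ≤ n ∧ c n + 1 < a n / a (n - 1))

/-- Support of (the canonical representation of) `x`. -/
def suppRep (c : ℕ → ℕ) : Set ℕ := {n | 1 ≤ n ∧ c n ≠ 0}

/-- `supp_q(x) = {n : c n = q n - 1}`. -/
def suppqRep (a c : ℕ → ℕ) : Set ℕ := {n | 1 ≤ n ∧ c n + 1 = a n / a (n - 1)}

/-- A set `S ⊆ ℕ` is `q`-bounded if `(q n)` is bounded on `S`. -/
def QBounded (a : ℕ → ℕ) (S : Set ℕ) : Prop := ∃ M, ∀ n ∈ S, a n / a (n - 1) ≤ M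

/-- A set `S ⊆ ℕ` is `q`-divergent if `q n → ∞` along `n ∈ S`. -/
def QDivergent (a : ℕ → ℕ) (S : Set ℕ) : Prop :=
  Filter.Tendsto (fun n => a n / a (n - 1)) (Filter.atTop ⊓ Filter.principal S) Filter.atTop

/-- Statistical convergence in a topological space, via neighborhoods. -/
def StatNhdTendsto {α : Type*} [TopologicalSpace α] (y : ℕ → α) (ℓ : α) : Prop :=
  ∀ U ∈ nhds ℓ, HasDensity {n | y n ∉ U} 0


theorem Zcard_mono {A B : Set ℕ} (h : A ⊆ B) (n : ℕ) :
    (Nat.card ↥(A ∩ Set.Iio n) : ℝ) ≤ Nat.card ↥(B ∩ Set.Iio n) := by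
  exact_mod_cast Nat.card_mono ((Set.finite_Iio n).inter_of_right B)
    (Set.inter_subset_inter_left _ h)

theorem Z_iff (A : Set ℕ) : HasDensity A 0 ↔
    ∀ ε : ℝ, 0 < ε → ∃ N : ℕ, ∀ n, N ≤ n → (Nat.card ↥(A ∩ Set.Iio n) : ℝ) ≤ ε * n := by
  unfold HasDensity
  rw [Metric.tendsto_atTop]
  constructor
  · intro h ε hε
    obtain ⟨N, hN⟩ := h ε hε
    refine ⟨N + 1, fun n hn => ?_⟩
    have h1 := hN n (by omega)
    rw [Real.dist_eq, sub_zero] at h1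
    have h2 := (le_abs_self _).trans h1.le
    have : (0 : ℝ) < n := by exact_mod_cast (by omega : 0 < n)
    rwa [div_le_iff₀ this] at h2
  · intro h ε hε
    obtain ⟨N, hN⟩ := h (ε / 2) (by positivity)
    refine ⟨N + 1, fun n hn => ?_⟩
    have h1 := hN n (by omega)
    have : (0 : ℝ) < n := by exact_mod_cast (by omega : 0 < n)
    rw [Real.dist_eq, sub_zero, abs_of_nonneg (by positivity), div_lt_iff₀ this]
    nlinarith

theorem Z_mono {A B : Set ℕ} (h : A ⊆ B) (hB : HasDensity B 0) : HasDensity A 0 := by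
  rw [Z_iff] at *
  intro ε hε
  obtain ⟨N, hN⟩ := hB ε hε
  exact ⟨N, fun n hn => (Zcard_mono h n).trans (hN n hn)⟩

theorem Z_union {A B : Set ℕ} (hA : HasDensity A 0) (hB : HasDensity B 0) :
    HasDensity (A ∪ B) 0 := by
  rw [Z_iff] at *
  intro ε hε
  obtain ⟨N, hN⟩ := hA (ε / 2) (by positivity)
  obtain ⟨N', hN'⟩ := hB (ε / 2) (by positivity)
  refine ⟨max N N', fun n hn => ?_⟩
  have h1 := hN n (le_trans (le_max_left _ _) hn)
  have h2 := hN' n (le_trans (le_max_right _ _) hn)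
  have h3 : Nat.card ↥((A ∪ B) ∩ Set.Iio n) ≤
      Nat.card ↥(A ∩ Set.Iio n) + Nat.card ↥(B ∩ Set.Iio n) := by
    rw [Set.union_inter_distrib_right]
    simp only [Nat.card_coe_set_eq]
    exact Set.ncard_union_le _ _
  have h4 : (Nat.card ↥((A ∪ B) ∩ Set.Iio n) : ℝ) ≤
      Nat.card ↥(A ∩ Set.Iio n) + Nat.card ↥(B ∩ Set.Iio n) := by exact_mod_cast h3
  linarith

theorem Z_Iio (N : ℕ) : HasDensity {n | n < N} 0 := by
  rw [Z_iff]
  intro ε hε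
  obtain ⟨K, hK⟩ := exists_nat_gt ((N : ℝ) / ε)
  refine ⟨K, fun n hn => ?_⟩
  have h1 : Nat.card ↥({n | n < N} ∩ Set.Iio n) ≤ N := by
    have := Nat.card_mono (Set.finite_Iio N) (Set.inter_subset_left : ({n | n < N} ∩ Set.Iio n) ⊆ _)
    simpa using this
  have h2 : (Nat.card ↥({n | n < N} ∩ Set.Iio n) : ℝ) ≤ N := by exact_mod_cast h1
  have h3 : (K : ℝ) ≤ n := by exact_mod_cast hn
  rw [div_lt_iff₀ hε] at hK
  nlinarith

theorem Z_shift_up {A : Set ℕ} (hA : HasDensity A 0) : HasDensity {n | n + 1 ∈ A} 0 := by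
  rw [Z_iff] at *
  intro ε hε
  obtain ⟨N, hN⟩ := hA (ε / 2) (by positivity)
  refine ⟨N + 1, fun n hn => ?_⟩
  have h1 := hN (n + 1) (by omega)
  have h3 : Nat.card ↥({n | n + 1 ∈ A} ∩ Set.Iio n) ≤ Nat.card ↥(A ∩ Set.Iio (n + 1)) := by
    simp only [Nat.card_coe_set_eq]
    refine Set.ncard_le_ncard_of_injOn (fun k => k + 1) ?_ ?_
      ((Set.finite_Iio _).inter_of_right _)
    · rintro k ⟨hk, hk'⟩
      simp only [Set.mem_Iio, Set.mem_setOf_eq] at hk hk'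
      exact ⟨hk, by simp only [Set.mem_Iio]; omega⟩
    · intro k _ l _ h
      simpa using h
  have h4 : (Nat.card ↥({n | n + 1 ∈ A} ∩ Set.Iio n) : ℝ) ≤ Nat.card ↥(A ∩ Set.Iio (n + 1)) := by
    exact_mod_cast h3
  push_cast at h1
  have : (1 : ℝ) ≤ n := by exact_mod_cast (by omega : 1 ≤ n)
  nlinarith

theorem Z_shift_down {A : Set ℕ} (hA : HasDensity A 0) :
    HasDensity {n | 1 ≤ n ∧ n - 1 ∈ A} 0 := by
  rw [Z_iff] at *
  intro ε hε
  obtain ⟨N, hN⟩ := hA ε hε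
  refine ⟨N, fun n hn => (le_trans ?_ (hN n hn))⟩
  have h3 : Nat.card ↥({n | 1 ≤ n ∧ n - 1 ∈ A} ∩ Set.Iio n) ≤ Nat.card ↥(A ∩ Set.Iio n) := by
    simp only [Nat.card_coe_set_eq]
    refine Set.ncard_le_ncard_of_injOn (fun k => k - 1) ?_ ?_
      ((Set.finite_Iio _).inter_of_right _)
    · rintro k ⟨⟨hk1, hk⟩, hk'⟩
      simp only [Set.mem_Iio] at hk'
      exact ⟨hk, by simp only [Set.mem_Iio]; omega⟩
    · rintro k ⟨⟨hk1, hk⟩, hk'⟩ l ⟨⟨hl1, hl⟩, hl'⟩ h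
      simp only at h
      omega
  exact_mod_cast h3

theorem Z_shifts {A : Set ℕ} (hA : HasDensity A 0) (L : ℕ) :
    HasDensity {n | ∃ j, j ≤ L ∧ n + 1 + j ∈ A} 0 := by
  induction L generalizing A with
  | zero =>
    refine Z_mono ?_ (Z_shift_up hA)
    rintro n ⟨j, hj, h⟩
    obtain rfl : j = 0 := by omega
    exact h
  | succ L ih =>
    refine Z_mono ?_ (Z_union (Z_shift_up hA) (ih (Z_shift_up hA)))
    rintro n ⟨j, hj, h⟩
    rcases j with _ | j
    · exact Or.inl h
    · exact Or.inr ⟨j, by omega, by simpa [add_assoc] using h⟩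

theorem Z_diag (g : ℕ → ℝ) (hg : ∀ n, 0 ≤ g n) (S : Set ℕ) :
    (∃ D' ⊆ S, HasDensity (S \ D') 0 ∧ Tendsto g (atTop ⊓ 𝓟 D') (𝓝 0)) ↔
    ∀ ε : ℝ, 0 < ε → HasDensity {n | n ∈ S ∧ ε ≤ g n} 0 := by
  constructor
  · rintro ⟨D', hD', hZ, ht⟩ ε hε
    have h1 : ∀ᶠ n in atTop ⊓ 𝓟 D', g n < ε := ht.eventually_lt_const hε
    rw [eventually_inf_principal, eventually_atTop] at h1
    obtain ⟨N, hN⟩ := h1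
    refine Z_mono ?_ (Z_union hZ (Z_Iio N))
    rintro n ⟨hn, hn'⟩
    by_cases h : n ∈ D'
    · right
      by_contra h2
      simp only [Set.mem_setOf_eq, not_lt] at h2
      exact absurd (hN n h2 h) (not_lt.2 hn')
    · exact Or.inl ⟨hn, h⟩
  · intro h
    have hpos : ∀ k : ℕ, (0 : ℝ) < 1 / ((k : ℝ) + 1) := fun k => by positivity
    have h1 : ∀ k : ℕ, ∃ N : ℕ, ∀ n, N ≤ n →
        (Nat.card ↥({n | n ∈ S ∧ 1 / ((k : ℝ) + 1) ≤ g n} ∩ Set.Iio n) : ℝ)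
          ≤ 1 / ((k : ℝ) + 1) * n :=
      fun k => (Z_iff _).1 (h _ (hpos k)) _ (hpos k)
    choose N hN using h1
    let K : ℕ → ℕ := fun n => Nat.findGreatest (fun k => N k ≤ n) n
    have hKm : Monotone K := by
      intro m n hmn
      exact Nat.findGreatest_mono (fun k hk => le_trans hk hmn) hmn
    have hKt : Tendsto K atTop atTop := by
      rw [tendsto_atTop]
      intro k
      filter_upwards [eventually_ge_atTop k, eventually_ge_atTop (N k)] with n h1 h2
      exact Nat.le_findGreatest h1 h2
    have hKs : ∀ n, N 0 ≤ n → N (K n) ≤ n := fun n hn =>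
      Nat.findGreatest_spec (P := fun k => N k ≤ n) (Nat.zero_le n) hn
    have hlim : Tendsto (fun n => 1 / ((K n : ℝ) + 1)) atTop (𝓝 0) :=
      (tendsto_one_div_add_atTop_nhds_zero_nat (𝕜 := ℝ)).comp hKt
    refine ⟨{n | n ∈ S ∧ g n < 1 / ((K n : ℝ) + 1)}, fun n hn => hn.1, ?_, ?_⟩
    · rw [Z_iff]
      intro ε hε
      have h2 := hlim.eventually_lt_const hε
      rw [eventually_atTop] at h2
      obtain ⟨M, hM⟩ := h2
      refine ⟨max M (N 0), fun n hn => ?_⟩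
      have h3 := hN (K n) n (hKs n (le_trans (le_max_right _ _) hn))
      have h4 := hM n (le_trans (le_max_left _ _) hn)
      have h5 : (1 / ((K n : ℝ) + 1)) * n ≤ ε * n := by gcongr
      refine le_trans ?_ (h3.trans h5)
      have : Nat.card ↥((S \ {n | n ∈ S ∧ g n < 1 / ((K n : ℝ) + 1)}) ∩ Set.Iio n) ≤
          Nat.card ↥({m | m ∈ S ∧ 1 / ((K n : ℝ) + 1) ≤ g m} ∩ Set.Iio n) := by
        refine Nat.card_mono ((Set.finite_Iio n).inter_of_right _) ?_
        rintro m ⟨⟨hm1, hm2⟩, hm3⟩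
        refine ⟨⟨hm1, ?_⟩, hm3⟩
        simp only [Set.mem_setOf_eq, not_and, not_lt] at hm2
        refine le_trans ?_ (hm2 hm1)
        have : (K m : ℝ) ≤ K n := by exact_mod_cast hKm (le_of_lt hm3)
        gcongr
      exact_mod_cast this
    · refine tendsto_of_tendsto_of_tendsto_of_le_of_le' tendsto_const_nhds
        (hlim.mono_left inf_le_left) (Eventually.of_forall hg) ?_
      rw [eventually_inf_principal]
      exact Eventually.of_forall fun n hn => hn.2.le

theorem nrm_lip (s t : ℝ) : ‖(s : AddCircle (1 : ℝ))‖ ≤ ‖(t : AddCircle (1 : ℝ))‖ + |s - t| := by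
  have h : (s : AddCircle (1 : ℝ)) = (t : AddCircle (1 : ℝ)) + ((s - t : ℝ) : AddCircle (1 : ℝ)) := by
    rw [← AddCircle.coe_add]; congr 1; ring
  have h2 : ‖((s - t : ℝ) : AddCircle (1 : ℝ))‖ ≤ |s - t| := by
    have := AddCircle.norm_eq (1 : ℝ) (x := s - t)
    rw [this]
    have := round_le (s - t) 0
    simpa using this
  rw [h]
  exact (norm_add_le _ _).trans (by linarith)

theorem nrm_small (t : ℝ) (h0 : 0 ≤ t) (h1 : t ≤ 1 / 2) : ‖(t : AddCircle (1 : ℝ))‖ = t := by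
  have := (AddCircle.norm_coe_eq_abs_iff (1 : ℝ) (x := t) one_ne_zero).2
    (by rw [abs_of_nonneg h0]; simpa using h1)
  rw [this, abs_of_nonneg h0]

/-- The tails of the canonical representation. -/
theorem exists_tails (a c : ℕ → ℕ) (ha : IsArithmeticSeq a)
    (hc : IsCanonicalRep a c) (x : AddCircle (1 : ℝ))
    (hx : x = ((∑' n, (c n : ℝ) / (a n : ℝ) : ℝ) : AddCircle (1 : ℝ))) :
    ∃ r : ℕ → ℝ, (∀ n, 0 ≤ r n) ∧ (∀ n, r n ≤ 1) ∧
      (∀ n, a n • x = ((r n : ℝ) : AddCircle (1 : ℝ))) ∧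
      (∀ n, qr a n = ((a n / a (n - 1) : ℕ) : ℝ)) ∧
      (∀ n, 2 ≤ a (n + 1) / a n) ∧
      ∀ n, ((a (n + 1) / a n : ℕ) : ℝ) * r n = c (n + 1) + r (n + 1) := by
  obtain ⟨ha0, ham, had⟩ := ha
  obtain ⟨hc0, hc1, -⟩ := hc
  have hapos : ∀ n, 0 < a n := fun n => by
    have := ham.monotone (Nat.zero_le n); omega
  have haposR : ∀ n, (0 : ℝ) < a n := fun n => by exact_mod_cast hapos n
  have hq : ∀ n, a (n + 1) = a (n + 1) / a n * a n := fun n => (Nat.div_mul_cancel (had n)).symm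
  have hqR : ∀ n, (a (n + 1) : ℝ) = ((a (n + 1) / a n : ℕ) : ℝ) * a n := fun n => by
    exact_mod_cast hq n
  have hq2 : ∀ n, 2 ≤ a (n + 1) / a n := by
    intro n
    by_contra h
    have h1 : a n < a (n + 1) := ham (Nat.lt_succ_self n)
    have h2 := hq n
    have h3 : a (n + 1) / a n * a n ≤ 1 * a n := Nat.mul_le_mul_right _ (by omega)
    omega
  let s : ℕ → ℝ := fun n => ∑ k ∈ Finset.range (n + 1), (c k : ℝ) / a k
  have hs : ∀ n, s (n + 1) = s n + (c (n + 1) : ℝ) / a (n + 1) := fun n =>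
    Finset.sum_range_succ _ _
  have hs0 : s 0 = 0 := by simp [s, hc0]
  have hanti : Antitone fun n => s n + 1 / (a n : ℝ) := by
    refine antitone_nat_of_succ_le fun n => ?_
    rw [hs, add_assoc, ← add_div]
    have h1 := hc1 (n + 1) (by omega)
    rw [Nat.add_sub_cancel] at h1
    have h2 : (c (n + 1) : ℝ) + 1 ≤ ((a (n + 1) / a n : ℕ) : ℝ) := by exact_mod_cast h1
    have h3 : ((c (n + 1) : ℝ) + 1) / a (n + 1) ≤ 1 / a n := by
      rw [div_le_div_iff₀ (haposR _) (haposR _), hqR n]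
      have := haposR n
      nlinarith
    linarith
  have hnn : ∀ n, 0 ≤ (c n : ℝ) / a n := fun n => by positivity
  have hsum : Summable fun n => (c n : ℝ) / a n := by
    refine summable_of_sum_range_le (c := 1) hnn fun n => ?_
    have h1 := hanti (Nat.zero_le n)
    simp only [hs0, ha0] at h1
    have h2 : s n = ∑ k ∈ Finset.range n, (c k : ℝ) / a k + (c n : ℝ) / a n :=
      Finset.sum_range_succ _ _
    have h3 := hnn n
    have h4 : 0 < 1 / (a n : ℝ) := by have := haposR n; positivity
    norm_num at h1
    rw [one_div] at h4
    linarith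
  have hlim : Tendsto s atTop (𝓝 (∑' n, (c n : ℝ) / a n)) :=
    hsum.hasSum.tendsto_sum_nat.comp (tendsto_add_atTop_nat 1)
  set X := ∑' n, (c n : ℝ) / a n with hX
  have hint : ∀ n, ∃ z : ℤ, (a n : ℝ) * s n = z := by
    intro n
    induction n with
    | zero => exact ⟨0, by simp [hs0]⟩
    | succ n ih =>
      obtain ⟨z, hz⟩ := ih
      refine ⟨((a (n + 1) / a n : ℕ) : ℤ) * z + (c (n + 1) : ℤ), ?_⟩
      rw [Int.cast_add, Int.cast_mul, Int.cast_natCast, Int.cast_natCast, ← hz, hs, mul_add,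
        mul_div_cancel₀ _ (haposR _).ne', hqR n]
      ring
  refine ⟨fun n => a n * (X - s n), fun n => ?_, fun n => ?_, fun n => ?_, fun n => ?_, hq2,
    fun n => ?_⟩
  · have : s n ≤ X := hsum.sum_le_tsum _ fun k _ => hnn k
    exact mul_nonneg (haposR n).le (by linarith)
  · have h1 : X ≤ s n + 1 / a n := by
      refine le_of_tendsto hlim ?_
      filter_upwards [eventually_ge_atTop n] with m hm
      have h2 := hanti hm
      simp only at h2
      have h4 : 0 < 1 / (a m : ℝ) := by have := haposR m; positivity
      linarith
    have h2 : (X - s n) ≤ 1 / a n := by linarith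
    rw [le_div_iff₀ (haposR n)] at h2
    linarith
  · obtain ⟨z, hz⟩ := hint n
    have h1 : (a n : ℝ) * (X - s n) = a n • X - z • (1 : ℝ) := by
      rw [mul_sub, hz]; simp
    show a n • x = (((a n : ℝ) * (X - s n) : ℝ) : AddCircle (1 : ℝ))
    rw [h1, AddCircle.coe_sub, hx, AddCircle.coe_nsmul, AddCircle.coe_zsmul, AddCircle.coe_period]
    simp
  · unfold qr
    rcases n with _ | n
    · simp [ha0]
    · rw [Nat.add_sub_cancel, hqR n, mul_div_cancel_right₀ _ (haposR n).ne']
  · simp only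
    have e : (a (n + 1) : ℝ) * (c (n + 1) / a (n + 1)) = c (n + 1) :=
      mul_div_cancel₀ _ (haposR _).ne'
    rw [hs]
    linear_combination (s n - X) * hqR n + e

theorem stat_iff (y : ℕ → AddCircle (1 : ℝ)) :
    StatNhdTendsto y 0 ↔ ∀ ε : ℝ, 0 < ε → HasDensity {n | ε ≤ ‖y n‖} 0 := by
  constructor
  · intro h ε hε
    refine Z_mono ?_ (h _ (Metric.ball_mem_nhds 0 hε))
    intro n hn
    simpa using hn
  · intro h U hU
    obtain ⟨ε, hε, hb⟩ := Metric.mem_nhds_iff.1 hU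
    refine Z_mono ?_ (h ε hε)
    intro n hn
    by_contra h2
    exact hn (hb (by simpa using h2))

theorem core (q c : ℕ → ℕ) (r : ℕ → ℝ) (S : Set ℕ) (hS : S = {n | 1 ≤ n ∧ c n ≠ 0})
    (h0 : ∀ n, 0 ≤ r n) (h1 : ∀ n, r n ≤ 1) (hq2 : ∀ n, 2 ≤ q (n + 1))
    (hr : ∀ n, (q (n + 1) : ℝ) * r n = c (n + 1) + r (n + 1))
    (hdiv : ∀ M : ℕ, ∃ N, ∀ n, N ≤ n → n ∈ S → M ≤ q n) :
    (∀ ε : ℝ, 0 < ε → HasDensity {n | ε ≤ ‖(r n : AddCircle (1 : ℝ))‖} 0) ↔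
    ((∀ ε : ℝ, 0 < ε →
        HasDensity {n | n ∈ S ∧ ε ≤ ‖(((c n : ℝ) / q n : ℝ) : AddCircle (1 : ℝ))‖} 0) ∧
      ∀ D ⊆ S, (∃ M, ∀ n ∈ D, q (n - 1) ≤ M) → ∀ ε : ℝ, 0 < ε →
        HasDensity {n | n ∈ D ∧ ε ≤ (c n : ℝ) / q n} 0) := by
  have hqR : ∀ n, (2 : ℝ) ≤ q (n + 1) := fun n => by exact_mod_cast hq2 n
  have hrd : ∀ n, r n = (c (n + 1) : ℝ) / q (n + 1) + r (n + 1) / q (n + 1) := by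
    intro n
    have := hqR n
    rw [← add_div, eq_div_iff (by linarith), ← hr]; ring
  have hrdle : ∀ n, r (n + 1) / q (n + 1) ≤ 1 / q (n + 1) := fun n => by
    have := h1 (n + 1); gcongr
  have hrdnn : ∀ n, 0 ≤ r (n + 1) / q (n + 1) := fun n => by
    have := h0 (n + 1); positivity
  have hnS : ∀ n, n + 1 ∉ S → r n = r (n + 1) / q (n + 1) := by
    intro n hn
    have : c (n + 1) = 0 := by
      by_contra h; exact hn (by rw [hS]; exact ⟨by omega, h⟩)
    rw [hrd n, this]; simp
  have hhalf : ∀ n, r (n + 1) / q (n + 1) ≤ r (n + 1) / 2 := fun n => by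
    have := h0 (n + 1); have := hqR n; gcongr
  have hS1 : ∀ n ∈ S, 1 ≤ n := fun n hn => by rw [hS] at hn; exact hn.1
  -- large quotients
  have hlarge : ∀ ε : ℝ, 0 < ε → ∃ M : ℕ, ∀ k : ℕ, M ≤ k → 1 / (k : ℝ) < ε := by
    intro ε hε
    obtain ⟨M, hM⟩ := exists_nat_gt (1 / ε)
    refine ⟨M, fun k hk => ?_⟩
    have h2 : (M : ℝ) ≤ k := by exact_mod_cast hk
    have h3 : 0 < 1 / ε := by positivity
    rw [div_lt_iff₀ (by linarith)]
    rw [div_lt_iff₀ hε] at hM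
    nlinarith
  constructor
  · intro h
    refine ⟨fun ε hε => ?_, ?_⟩
    · obtain ⟨M, hM⟩ := hlarge (ε / 2) (by positivity)
      obtain ⟨N, hN⟩ := hdiv M
      refine Z_mono ?_ (Z_union (Z_Iio N) (Z_shift_down (h (ε / 2) (by positivity))))
      rintro n ⟨hn, hn2⟩
      by_cases hlt : n < N
      · exact Or.inl hlt
      right
      have hn1 := hS1 n hn
      obtain ⟨m, rfl⟩ : ∃ m, n = m + 1 := ⟨n - 1, by omega⟩
      refine ⟨hn1, ?_⟩
      simp only [Set.mem_setOf_eq, Nat.add_sub_cancel]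
      have h2 := hM _ (hN _ (not_lt.1 hlt) hn)
      have h3 := nrm_lip ((c (m + 1) : ℝ) / q (m + 1)) (r m)
      have h4 : |(c (m + 1) : ℝ) / q (m + 1) - r m| ≤ ε / 2 := by
        rw [abs_le]
        have := hrd m; have := hrdle m; have := hrdnn m
        constructor <;> linarith
      linarith
    · rintro D hD ⟨M, hM⟩ ε hε
      obtain ⟨N, hN⟩ := hdiv (M + 1)
      refine Z_mono ?_ (Z_union (Z_Iio (N + 2))
        (Z_shift_down (Z_shift_down (h (ε / (M + 1)) (by positivity)))))
      rintro n ⟨hn, hn2⟩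
      by_cases hlt : n < N + 2
      · exact Or.inl hlt
      right
      obtain ⟨m, rfl⟩ : ∃ m, n = m + 2 := ⟨n - 2, by omega⟩
      refine ⟨by omega, by omega, ?_⟩
      have h2 : q (m + 1) ≤ M := hM _ hn
      have h3 : m + 1 ∉ S := fun hmem => by
        have := hN (m + 1) (by omega) hmem; omega
      have h4 := hnS m h3
      have h5 := hhalf m
      have h6 := h1 (m + 1)
      show ε / (M + 1) ≤ ‖(r m : AddCircle (1 : ℝ))‖
      rw [nrm_small (r m) (h0 m) (by linarith), h4]
      have h7 := hrd (m + 1)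
      have h8 := hrdnn (m + 1)
      have h9 : ε ≤ r (m + 1) := by
        have : ε ≤ (c (m + 1 + 1) : ℝ) / q (m + 1 + 1) := hn2
        linarith
      have h10 : (q (m + 1) : ℝ) ≤ M := by exact_mod_cast h2
      have := hqR m
      exact div_le_div₀ (h0 _) h9 (by linarith) (by linarith)
  · rintro ⟨hi, hii⟩ ε hε
    obtain ⟨M, hM⟩ := hlarge (ε / 2) (by positivity)
    obtain ⟨N, hN⟩ := hdiv M
    obtain ⟨L, hL⟩ : ∃ L : ℕ, (1 / 2 : ℝ) ^ L < ε := exists_pow_lt_of_lt_one hε (by norm_num)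
    have hE := hi (ε / 2) (by positivity)
    have hF := hii {m | m ∈ S ∧ q (m - 1) ≤ M} (fun m hm => hm.1) ⟨M, fun m hm => hm.2⟩
      (ε / 2) (by positivity)
    have key : ∀ L n, N ≤ n → n + 1 ∉ S →
        (∀ j, j ≤ L → n + 1 + j ∉
          {n | n ∈ {m | m ∈ S ∧ q (m - 1) ≤ M} ∧ ε / 2 ≤ (c n : ℝ) / q n}) →
        r n < ε ∨ r n ≤ (1 / 2 : ℝ) ^ L := by
      intro L
      induction L with
      | zero => intro n _ _ _; right; simpa using h1 n
      | succ L ih =>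
        intro n hn hnot hj
        have e1 := hnS n hnot
        have e2 := hhalf n
        by_cases hs : n + 1 + 1 ∈ S
        · left
          by_cases hqM : q (n + 1) ≤ M
          · have h3 := hj 1 (by omega)
            have h4 : (c (n + 1 + 1) : ℝ) / q (n + 1 + 1) < ε / 2 := by
              by_contra hcon
              exact h3 ⟨⟨hs, hqM⟩, not_lt.1 hcon⟩
            have h5 := hrd (n + 1)
            have h6 := hrdle (n + 1)
            have h7 := hM _ (hN _ (by omega) hs)
            linarith [h0 (n + 1)]
          · have h7 := hM (q (n + 1)) (by omega)
            have h6 := hrdle n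
            linarith
        · have h3 := ih (n + 1) (by omega) hs (fun j hjL => by
            have := hj (j + 1) (by omega)
            rwa [show n + 1 + (j + 1) = n + 1 + 1 + j by ring] at this)
          rw [pow_succ]
          rcases h3 with h3 | h3
          · left; linarith [h0 (n + 1)]
          · right; linarith
    refine Z_mono ?_ (Z_union (Z_Iio N) (Z_union (Z_shifts hE L) (Z_shifts hF L)))
    intro n hn
    by_contra hcon
    simp only [Set.mem_union, not_or] at hcon
    obtain ⟨hc1, hc2, hc3⟩ := hcon
    simp only [Set.mem_setOf_eq, not_lt] at hc1
    have hn' : ε ≤ ‖(r n : AddCircle (1 : ℝ))‖ := hn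
    by_cases hs : n + 1 ∈ S
    · have h3 : ‖(((c (n + 1) : ℝ) / q (n + 1) : ℝ) : AddCircle (1 : ℝ))‖ < ε / 2 := by
        by_contra h
        exact hc2 ⟨0, by omega, hs, not_lt.1 h⟩
      have h4 := nrm_lip (r n) ((c (n + 1) : ℝ) / q (n + 1))
      have h2 := hM _ (hN _ (by omega) hs)
      have h5 : |r n - (c (n + 1) : ℝ) / q (n + 1)| ≤ ε / 2 := by
        rw [abs_le]
        have := hrd n; have := hrdle n; have := hrdnn n
        constructor <;> linarith
      linarith
    · have h3 := key L n hc1 hs (fun j hj hmem => hc3 ⟨j, hj, hmem⟩)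
      have h4 := hnS n hs
      have h5 := hhalf n
      have h6 := h1 (n + 1)
      rw [nrm_small (r n) (h0 n) (by linarith)] at hn'
      rcases h3 with h3 | h3 <;> linarith

/-- Corollary: if `supp(x)` is `q`-divergent, then `x ∈ t^s_{(a_n)}(𝕋)` iff
(i) `c_n/q_n → 0` in `𝕋` along some `D' ⊆ supp(x)` with `d(supp(x) \ D') = 0`;
(ii) for every `D ⊆ supp(x)` with `d(D \ supp(x)) = 0` such that `D - 1` is
`q`-bounded, `c_n/q_n → 0` in `ℝ` along some `D' ⊆ D` with `d(D \ D') = 0`. -/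
theorem sTorsion_iff_of_qDivergent_supp (a c : ℕ → ℕ) (ha : IsArithmeticSeq a)
    (hc : IsCanonicalRep a c) (x : AddCircle (1 : ℝ))
    (hx : x = ((∑' n, (c n : ℝ) / (a n : ℝ) : ℝ) : AddCircle (1 : ℝ)))
    (hqd : QDivergent a (suppRep c)) :
    StatNhdTendsto (fun n => a n • x) (0 : AddCircle (1 : ℝ)) ↔
      ((∃ D' ⊆ suppRep c, HasDensity (suppRep c \ D') 0 ∧
          Filter.Tendsto (fun n => (((c n : ℝ) / qr a n : ℝ) : AddCircle (1 : ℝ)))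
            (Filter.atTop ⊓ Filter.principal D') (nhds 0)) ∧
        ∀ D ⊆ suppRep c, HasDensity (D \ suppRep c) 0 →
          QBounded a ((fun n => n - 1) '' D) →
            ∃ D' ⊆ D, HasDensity (D \ D') 0 ∧
              Filter.Tendsto (fun n => (c n : ℝ) / qr a n)
                (Filter.atTop ⊓ Filter.principal D') (nhds 0)) := by
  obtain ⟨r, h0, h1, hax, hqr, hq2, hr⟩ := exists_tails a c ha hc x hx
  have hdiv : ∀ M : ℕ, ∃ N, ∀ n, N ≤ n → n ∈ suppRep c → M ≤ a n / a (n - 1) := by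
    intro M
    have := (tendsto_atTop.1 hqd) M
    rwa [eventually_inf_principal, eventually_atTop] at this
  have hcore := core (fun n => a n / a (n - 1)) c r (suppRep c) rfl h0 h1 hq2 hr hdiv
  rw [stat_iff]
  simp only [hax, hqr]
  rw [hcore]
  refine and_congr ?_ ?_
  · rw [← Z_diag _ (fun n => norm_nonneg _)]
    simp only [tendsto_zero_iff_norm_tendsto_zero (E := AddCircle (1 : ℝ))]
  · have hQ : ∀ D : Set ℕ, QBounded a ((fun n => n - 1) '' D) ↔
        ∃ M, ∀ n ∈ D, a (n - 1) / a (n - 1 - 1) ≤ M := by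
      intro D
      simp [QBounded]
    constructor
    · intro h D hD _ hb
      exact (Z_diag (fun n => (c n : ℝ) / ((a n / a (n - 1) : ℕ) : ℝ))
        (fun n => by positivity) D).2 (h D hD ((hQ D).1 hb))
    · intro h D hD hb
      refine (Z_diag (fun n => (c n : ℝ) / ((a n / a (n - 1) : ℕ) : ℝ))
        (fun n => by positivity) D).1 (h D hD ?_ ((hQ D).2 hb))
      rw [Set.diff_eq_empty.2 hD]
      exact Z_mono (Set.empty_subset _) (Z_Iio 0)
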